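/- arXiv:1010.4609 — 7 statements merged into one kernel-verified Lean document; each statement's English description precedes it below -/
import Mathlib

section
/- Let v be a variable of a binary CSP with n = |V| variables and let a, b ∈ D(v). Then: (i) a and b are neighborhood interchangeable if and only if they are 2-interchangeable; (ii) for all integers i, j with 2 ≤ i ≤ j ≤ n, if a and b are i-interchangeable then they are j-interchangeable; (iii) a and b are n-interchangeable if and only if they are fully interchangeable. Consequently, neighborhood interchangeability implies k-interchangeability for every 2 ≤ k ≤ n, which in turn implies full interchangeability. -/
/-- A binary CSP: variables `V`, a domain `dom v ⊆ α` for each variable, a symmetric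
irreflexive relation `hasCstr` telling which pairs of distinct variables are related by a
constraint, and for related variables the symmetric compatibility relation `compat`. -/
structure BinaryCSP (V α : Type) where
  dom : V → Set α
  hasCstr : V → V → Prop
  compat : V → α → V → α → Prop
  hasCstr_symm : ∀ {v w}, hasCstr v w → hasCstr w v
  hasCstr_irrefl : ∀ v, ¬ hasCstr v v
  compat_symm : ∀ {v w} {a c}, compat v a w c → compat w c v a

namespace BinaryCSP

variable {V α : Type}

/-- A solution: an assignment in the domains satisfying all constraints. -/
def Solution (P : BinaryCSP V α) (s : V → α) : Prop :=
  (∀ v, s v ∈ P.dom v) ∧ ∀ v w, P.hasCstr v w → P.compat v (s v) w (s w)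

/-- The support set of value `a` for variable `v` at a variable `w`:
the domain values of `w` compatible with `v = a`. -/
def Support (P : BinaryCSP V α) (v : V) (a : α) (w : V) : Set α :=
  {c | c ∈ P.dom w ∧ P.compat v a w c}

/-- A solution of the subproblem induced by the set `S` of variables. -/
def SubSolution (P : BinaryCSP V α) (S : Set V) (s : V → α) : Prop :=
  (∀ v ∈ S, s v ∈ P.dom v) ∧
    ∀ v ∈ S, ∀ w ∈ S, P.hasCstr v w → P.compat v (s v) w (s w)

/-- Neighborhood interchangeability (NI) of values `a`, `b` for variable `v`. -/
def NI (P : BinaryCSP V α) (v : V) (a b : α) : Prop :=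
  ∀ w, P.hasCstr v w → P.Support v a w = P.Support v b w

/-- Full interchangeability (FI) of values `a`, `b` for variable `v`. -/
def FI [DecidableEq V] (P : BinaryCSP V α) (v : V) (a b : α) : Prop :=
  (∀ s, P.Solution s → s v = a → P.Solution (Function.update s v b)) ∧
  (∀ s, P.Solution s → s v = b → P.Solution (Function.update s v a))

/-- Full interchangeability of `a`, `b` for `v` in the subproblem induced by `S`. -/
def SubFI [DecidableEq V] (P : BinaryCSP V α) (S : Set V) (v : V) (a b : α) : Prop :=
  (∀ s, P.SubSolution S s → s v = a → P.SubSolution S (Function.update s v b)) ∧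
  (∀ s, P.SubSolution S s → s v = b → P.SubSolution S (Function.update s v a))

/-- Subproblem interchangeability (SPrI) with respect to `S` (where `v ∈ S`):
full interchangeability in the subproblem induced by `S`. -/
def SPrI [DecidableEq V] (P : BinaryCSP V α) (S : Set V) (v : V) (a b : α) : Prop :=
  P.SubFI S v a b

/-- k-interchangeability (KI): `a`, `b` are fully interchangeable in every
subproblem induced by `v` together with `k - 1` other variables. -/
def KI [DecidableEq V] (P : BinaryCSP V α) (k : ℕ) (v : V) (a b : α) : Prop :=
  ∀ T : Finset V, v ∉ T → T.card = k - 1 → P.SubFI (insert v (T : Set V)) v a b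

/-- Partial interchangeability (PI) with respect to `S` (where `v ∈ S`). -/
def PI (P : BinaryCSP V α) (S : Set V) (v : V) (a b : α) : Prop :=
  (∀ s, P.Solution s → s v = a →
    ∃ s', P.Solution s' ∧ s' v = b ∧ ∀ w ∉ S, s' w = s w) ∧
  (∀ s, P.Solution s → s v = b →
    ∃ s', P.Solution s' ∧ s' v = a ∧ ∀ w ∉ S, s' w = s w)

/-- Substitutability (Sub): `a` is substitutable for `b` at variable `v`. -/
def Sub [DecidableEq V] (P : BinaryCSP V α) (v : V) (a b : α) : Prop :=
  ∀ s, P.Solution s → s v = b → P.Solution (Function.update s v a)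

/-- Neighborhood substitutability (NSub): `a` is NSub for `b` at variable `v`. -/
def NSub (P : BinaryCSP V α) (v : V) (a b : α) : Prop :=
  ∀ w, P.hasCstr v w → P.Support v b w ⊆ P.Support v a w

/-- Neighborhood partial interchangeability (NPI) given boundary `S` (where `v ∈ S`). -/
def NPI (P : BinaryCSP V α) (S : Set V) (v : V) (a b : α) : Prop :=
  ∀ w, w ∉ S → P.hasCstr v w → P.Support v a w = P.Support v b w

/-- Directional interchangeability (DirI) with respect to a strict order `r` on variables. -/
def DirI (P : BinaryCSP V α) (r : V → V → Prop) (v : V) (a b : α) : Prop :=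
  ∀ w, r w v → P.hasCstr v w → P.Support v a w = P.Support v b w

/-- Dynamic neighborhood interchangeability (DynNI) of `a`, `b` for `v` with respect to
the partial assignment `A` on the set `W` of variables (where `v ∉ W`). -/
def DynNI (P : BinaryCSP V α) (W : Set V) (A : V → α) (v : V) (a b : α) : Prop :=
  (∀ w, w ∉ W → P.hasCstr v w → P.Support v a w = P.Support v b w) ∧
  (∀ w ∈ W, P.hasCstr v w → (P.compat v a w (A w) ↔ P.compat v b w (A w)))

/-- Full dynamic interchangeability (FDynI) with respect to the partial assignment
`A` on `W` (where `v ∉ W`). -/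
def FDynI [DecidableEq V] (P : BinaryCSP V α) (W : Set V) (A : V → α) (v : V) (a b : α) :
    Prop :=
  (∀ s, P.Solution s → (∀ w ∈ W, s w = A w) → s v = a →
    P.Solution (Function.update s v b)) ∧
  (∀ s, P.Solution s → (∀ w ∈ W, s w = A w) → s v = b →
    P.Solution (Function.update s v a))

/-- Full dynamic substitutability (FDynSub): `a` is fully dynamically substitutable for
`b` with respect to the partial assignment `A` on `W` (where `v ∉ W`). -/
def FDynSub [DecidableEq V] (P : BinaryCSP V α) (W : Set V) (A : V → α) (v : V) (a b : α) :
    Prop :=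
  ∀ s, P.Solution s → (∀ w ∈ W, s w = A w) → s v = b → P.Solution (Function.update s v a)

/-- Neighborhood tuple interchangeability (NTI) of `a`, `b` for `v` with respect to the
set `S` of variables (where `v ∉ S`). -/
def NTI (P : BinaryCSP V α) (S : Set V) (v : V) (a b : α) : Prop :=
  (∀ t, P.SubSolution (insert v S) t → t v = a →
    ∃ t', P.SubSolution (insert v S) t' ∧ t' v = b ∧
      ∀ u ∈ insert v S, ∀ w, w ∉ insert v S → P.hasCstr u w →
        P.Support u (t u) w = P.Support u (t' u) w) ∧
  (∀ t, P.SubSolution (insert v S) t → t v = b →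
    ∃ t', P.SubSolution (insert v S) t' ∧ t' v = a ∧
      ∀ u ∈ insert v S, ∀ w, w ∉ insert v S → P.hasCstr u w →
        P.Support u (t u) w = P.Support u (t' u) w)

/-- Forward neighborhood interchangeability (ForwNI) of two assignments on `U`. -/
def ForwNI (P : BinaryCSP V α) (U : Set V) (u u' : V → α) : Prop :=
  ∀ x ∈ U, ∀ w, w ∉ U → P.hasCstr x w → P.Support x (u x) w = P.Support x (u' x) w

/-- Context dependent interchangeability (CtxDepI): some assignment to the other
variables extends to a solution both with `v = a` and with `v = b`. -/
def CtxDepI [DecidableEq V] (P : BinaryCSP V α) (v : V) (a b : α) : Prop :=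
  ∃ t : V → α, P.Solution (Function.update t v a) ∧ P.Solution (Function.update t v b)

/-- Generalized neighborhood substitutability (GNSub): `a` and `b` share at least one
support with respect to each neighboring variable. -/
def GNSub (P : BinaryCSP V α) (v : V) (a b : α) : Prop :=
  ∀ w, P.hasCstr v w → ∃ c ∈ P.dom w, P.compat v a w c ∧ P.compat v b w c

end BinaryCSP
namespace BinaryCSP

theorem subSolution_update_aux {V α : Type} [DecidableEq V] (P : BinaryCSP V α) (S : Set V)
    (v : V) (b : α) (hb : b ∈ P.dom v) (s : V → α) (hs : P.SubSolution S s)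
    (h : ∀ w ∈ S, P.hasCstr v w → P.compat v b w (s w)) :
    P.SubSolution S (Function.update s v b) := by
  refine ⟨fun x hx => ?_, fun x hx y hy hxy => ?_⟩
  · by_cases e : x = v
    · subst e; simpa using hb
    · simpa [e] using hs.1 x hx
  · by_cases e : x = v
    · subst e
      have hne : y ≠ x := by rintro rfl; exact P.hasCstr_irrefl _ hxy
      simpa [hne] using h y hy hxy
    · by_cases e' : y = v
      · subst e'
        simpa [e] using P.compat_symm (h x hx (P.hasCstr_symm hxy))
      · simpa [e, e'] using hs.2 x hx y hy hxy

theorem subSolution_mono_aux {V α : Type} (P : BinaryCSP V α) {S S' : Set V} (hS : S' ⊆ S)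
    {s : V → α} (hs : P.SubSolution S s) : P.SubSolution S' s :=
  ⟨fun x hx => hs.1 x (hS hx), fun x hx y hy => hs.2 x (hS hx) y (hS hy)⟩

theorem half_mono_aux {V α : Type} [DecidableEq V] (P : BinaryCSP V α) (v : V) (a b : α)
    (hb : b ∈ P.dom v) (i j : ℕ) (hi : 2 ≤ i) (hij : i ≤ j)
    (H : ∀ T : Finset V, v ∉ T → T.card = i - 1 → ∀ s, P.SubSolution (insert v (T : Set V)) s →
      s v = a → P.SubSolution (insert v (T : Set V)) (Function.update s v b))
    (T : Finset V) (hv : v ∉ T) (hT : T.card = j - 1) (s : V → α)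
    (hs : P.SubSolution (insert v (T : Set V)) s) (hsv : s v = a) :
    P.SubSolution (insert v (T : Set V)) (Function.update s v b) := by
  refine subSolution_update_aux P _ v b hb s hs fun w hw hvw => ?_
  have hne : w ≠ v := by rintro rfl; exact P.hasCstr_irrefl _ hvw
  have hwT : w ∈ T := by simpa [hne] using hw
  obtain ⟨T', h1, h2, h3⟩ := Finset.exists_subsuperset_card_eq (s := {w}) (t := T) (n := i - 1)
    (by simpa using hwT) (by simp; omega) (by omega)
  have hwT' : w ∈ T' := h1 (by simp)
  have := (H T' (fun h => hv (h2 h)) h3 s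
    (subSolution_mono_aux P (Set.insert_subset_insert (by exact_mod_cast h2)) hs) hsv).2 v
      (by simp) w (by simp [hwT']) hvw
  simpa [hne] using this

theorem KI_mono_aux {V α : Type} [DecidableEq V] (P : BinaryCSP V α) (v : V) (a b : α)
    (ha : a ∈ P.dom v) (hb : b ∈ P.dom v) (i j : ℕ) (hi : 2 ≤ i) (hij : i ≤ j)
    (H : P.KI i v a b) : P.KI j v a b := fun T hv hT =>
  ⟨half_mono_aux P v a b hb i j hi hij (fun T h h' => (H T h h').1) T hv hT,
   half_mono_aux P v b a ha i j hi hij (fun T h h' => (H T h h').2) T hv hT⟩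

theorem half_two_aux {V α : Type} [DecidableEq V] (P : BinaryCSP V α) (v : V) (a b : α)
    (ha : a ∈ P.dom v) (w : V) (hvw : P.hasCstr v w)
    (H : ∀ s, P.SubSolution (insert v (({w} : Finset V) : Set V)) s →
      s v = a → P.SubSolution (insert v (({w} : Finset V) : Set V)) (Function.update s v b)) :
    P.Support v a w ⊆ P.Support v b w := by
  rintro c ⟨hc, hac⟩
  have hne : w ≠ v := by rintro rfl; exact P.hasCstr_irrefl _ hvw
  refine ⟨hc, ?_⟩
  have hs : P.SubSolution (insert v (({w} : Finset V) : Set V))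
      (Function.update (fun _ => c) v a) := by
    refine ⟨fun x hx => ?_, fun x hx y hy hxy => ?_⟩
    · simp at hx
      rcases hx with rfl | rfl
      · simpa using ha
      · simpa [hne] using hc
    · simp at hx hy
      rcases hx with rfl | rfl <;> rcases hy with rfl | rfl
      · exact (P.hasCstr_irrefl _ hxy).elim
      · simpa [hne] using hac
      · simpa [hne] using P.compat_symm hac
      · exact (P.hasCstr_irrefl _ hxy).elim
  have := (H _ hs (by simp)).2 v (by simp) w (by simp) hvw
  simpa [hne] using this

theorem NI_iff_aux {V α : Type} [DecidableEq V] (P : BinaryCSP V α) (v : V) (a b : α)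
    (ha : a ∈ P.dom v) (hb : b ∈ P.dom v) : P.NI v a b ↔ P.KI 2 v a b := by
  constructor
  · intro h T hv hT
    refine ⟨fun s hs hsv => subSolution_update_aux P _ v b hb s hs fun w hw hvw => ?_,
      fun s hs hsv => subSolution_update_aux P _ v a ha s hs fun w hw hvw => ?_⟩
    · have : s w ∈ P.Support v a w := ⟨hs.1 w hw, hsv ▸ hs.2 v (by simp) w hw hvw⟩
      rw [h w hvw] at this
      exact this.2
    · have : s w ∈ P.Support v b w := ⟨hs.1 w hw, hsv ▸ hs.2 v (by simp) w hw hvw⟩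
      rw [← h w hvw] at this
      exact this.2
  · intro h w hvw
    have hne : v ≠ w := by rintro rfl; exact P.hasCstr_irrefl _ hvw
    have h' := h {w} (by simpa using hne) (by simp)
    exact Set.Subset.antisymm (half_two_aux P v a b ha w hvw h'.1)
      (half_two_aux P v b a hb w hvw h'.2)

theorem KI_card_aux {V α : Type} [Fintype V] [DecidableEq V] (P : BinaryCSP V α) (v : V)
    (a b : α) : P.KI (Fintype.card V) v a b ↔ P.FI v a b := by
  have key : P.SubFI Set.univ v a b ↔ P.FI v a b := by
    simp [SubFI, FI, SubSolution, Solution]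
  rw [← key]
  constructor
  · intro h
    have := h (Finset.univ.erase v) (by simp) (by simp [Finset.card_erase_of_mem])
    have e : insert v ((Finset.univ.erase v : Finset V) : Set V) = Set.univ := by
      ext x; simp [em]
    rwa [e] at this
  · intro h T hv hT
    have hpos : 0 < Fintype.card V := Fintype.card_pos_iff.2 ⟨v⟩
    have e0 : insert v T = Finset.univ := by
      rw [← Finset.card_eq_iff_eq_univ, Finset.card_insert_of_notMem hv]; omega
    have e : insert v (T : Set V) = Set.univ := by
      rw [← Finset.coe_insert, e0, Finset.coe_univ]
    rwa [e]

end BinaryCSP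

/-- NI ↔ 2-interchangeability; i-interchangeability implies
j-interchangeability for 2 ≤ i ≤ j ≤ n; n-interchangeability ↔ FI; consequently
NI implies k-interchangeability for every 2 ≤ k ≤ n, which in turn implies FI. -/
theorem stmt_0 {V α : Type} [Fintype V] [DecidableEq V] [Fintype α]
    (P : BinaryCSP V α) (v : V) (a b : α)
    (ha : a ∈ P.dom v) (hb : b ∈ P.dom v) :
    (P.NI v a b ↔ P.KI 2 v a b) ∧
    (∀ i j : ℕ, 2 ≤ i → i ≤ j → j ≤ Fintype.card V →
      P.KI i v a b → P.KI j v a b) ∧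
    (P.KI (Fintype.card V) v a b ↔ P.FI v a b) ∧
    (P.NI v a b → ∀ k, 2 ≤ k → k ≤ Fintype.card V → P.KI k v a b) ∧
    (∀ k, 2 ≤ k → k ≤ Fintype.card V → P.KI k v a b → P.FI v a b) := by
  have m := BinaryCSP.KI_mono_aux P v a b ha hb
  have n := BinaryCSP.NI_iff_aux P v a b ha hb
  have f := BinaryCSP.KI_card_aux P v a b
  exact ⟨n, fun i j hi hij _ => m i j hi hij, f, fun h k hk _ => m 2 k le_rfl hk (n.1 h),
    fun k hk hkn h => f.1 (m k _ hk hkn h)⟩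
end

section
/- Subproblem interchangeability and partial interchangeability are not comparable: there exists a binary CSP with a variable v, values a, b ∈ D(v), and a set S of variables with v ∈ S such that a and b are partially interchangeable with respect to S but not subproblem interchangeable with respect to S; and there exists a binary CSP with a variable v, values a, b ∈ D(v), and a set S of variables with v ∈ S such that a and b are subproblem interchangeable with respect to S but not partially interchangeable with respect to S. -/
/-- SPrI and PI are not comparable. -/
theorem stmt_2 :
    (∃ (V α : Type) (_ : Fintype V) (_ : DecidableEq V) (_ : Fintype α)
        (P : BinaryCSP V α) (v : V) (a b : α) (S : Set V),
        a ∈ P.dom v ∧ b ∈ P.dom v ∧ v ∈ S ∧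
        P.PI S v a b ∧ ¬ P.SPrI S v a b) ∧
    (∃ (V α : Type) (_ : Fintype V) (_ : DecidableEq V) (_ : Fintype α)
        (P : BinaryCSP V α) (v : V) (a b : α) (S : Set V),
        a ∈ P.dom v ∧ b ∈ P.dom v ∧ v ∈ S ∧
        P.SPrI S v a b ∧ ¬ P.PI S v a b) := by
  let P : BinaryCSP Bool Bool :=
    { dom := fun _ => Set.univ
      hasCstr := fun v w => v ≠ w
      compat := fun _ a _ c => a = c
      hasCstr_symm := fun h => h.symm
      hasCstr_irrefl := fun _ h => h rfl
      compat_symm := fun h => h.symm }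
  have hconst : ∀ c : Bool, P.Solution (fun _ => c) :=
    fun c => ⟨fun _ => Set.mem_univ _, fun _ _ _ => rfl⟩
  refine ⟨⟨Bool, Bool, inferInstance, inferInstance, inferInstance, P, true, true, false,
      Set.univ, Set.mem_univ _, Set.mem_univ _, Set.mem_univ _, ⟨?_, ?_⟩, ?_⟩,
    ⟨Bool, Bool, inferInstance, inferInstance, inferInstance, P, true, true, false,
      {true}, Set.mem_univ _, Set.mem_univ _, rfl, ⟨?_, ?_⟩, ?_⟩⟩
  · exact fun s _ _ => ⟨fun _ => false, hconst _, rfl, fun w hw => (hw (Set.mem_univ w)).elim⟩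
  · exact fun s _ _ => ⟨fun _ => true, hconst _, rfl, fun w hw => (hw (Set.mem_univ w)).elim⟩
  · intro h
    have h1 := (h.1 (fun _ => true) ⟨fun _ _ => Set.mem_univ _, fun _ _ _ _ _ => rfl⟩ rfl).2
      true (Set.mem_univ _) false (Set.mem_univ _) Bool.noConfusion
    exact absurd (show false = true from h1) Bool.noConfusion
  · exact fun s _ _ => ⟨fun _ _ => Set.mem_univ _,
      fun v hv w hw hvw => (hvw (Eq.trans hv (Eq.symm hw))).elim⟩
  · exact fun s _ _ => ⟨fun _ _ => Set.mem_univ _,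
      fun v hv w hw hvw => (hvw (Eq.trans hv (Eq.symm hw))).elim⟩
  · intro h
    obtain ⟨s', hs, hb, hw⟩ := h.1 (fun _ => true) (hconst _) rfl
    have h1 : s' true = s' false := hs.2 true false Bool.noConfusion
    have h2 : s' false = true := hw false (by simp)
    rw [hb, h2] at h1
    exact absurd h1 Bool.noConfusion
end

section
/- If values a, b ∈ D(v) of a binary CSP are neighborhood partially interchangeable given boundary S (with v ∈ S), then a and b are fully interchangeable in the subproblem induced by (V ∖ S) ∪ {v}; in particular, a and b are subproblem interchangeable with respect to the set (V ∖ S) ∪ {v}. -/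
theorem npi_aux {V α : Type} [DecidableEq V]
    (P : BinaryCSP V α) (v : V) (a b : α) (hb : b ∈ P.dom v)
    (S : Set V) (h : P.NPI S v a b) (s : V → α)
    (hs : P.SubSolution (Sᶜ ∪ {v}) s) (hsv : s v = a) :
    P.SubSolution (Sᶜ ∪ {v}) (Function.update s v b) := by
  obtain ⟨h1, h2⟩ := hs
  have hv : v ∈ Sᶜ ∪ {v} := Or.inr rfl
  have key : ∀ w ∈ Sᶜ ∪ {v}, w ≠ v → P.hasCstr v w → P.compat v b w (s w) := by
    intro w hw hne hc
    have hwS : w ∉ S := hw.resolve_right hne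
    have hm : s w ∈ P.Support v a w := ⟨h1 w hw, hsv ▸ h2 v hv w hw hc⟩
    rw [h w hwS hc] at hm
    exact hm.2
  refine ⟨fun x hx => ?_, fun x hx w hw hc => ?_⟩
  · by_cases hxv : x = v
    · subst hxv; simpa using hb
    · simpa [Function.update_of_ne hxv] using h1 x hx
  · by_cases hxv : x = v
    · subst hxv
      have hne : w ≠ x := fun e => P.hasCstr_irrefl x (e ▸ hc)
      rw [Function.update_self, Function.update_of_ne hne]
      exact key w hw hne hc
    · rw [Function.update_of_ne hxv]
      by_cases hwv : w = v
      · subst hwv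
        rw [Function.update_self]
        exact P.compat_symm (key x hx hxv (P.hasCstr_symm hc))
      · rw [Function.update_of_ne hwv]
        exact h2 x hx w hw hc

/-- NPI given boundary `S` implies full interchangeability in the
subproblem induced by `(V \ S) ∪ {v}`, i.e. SPrI with respect to that set. -/
theorem stmt_7 {V α : Type} [Fintype V] [DecidableEq V] [Fintype α]
    (P : BinaryCSP V α) (v : V) (a b : α)
    (ha : a ∈ P.dom v) (hb : b ∈ P.dom v)
    (S : Set V) (hvS : v ∈ S)
    (h : P.NPI S v a b) :
    P.SubFI (Sᶜ ∪ {v}) v a b ∧ P.SPrI (Sᶜ ∪ {v}) v a b := by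
  have h' : P.NPI S v b a := fun w hw hc => (h w hw hc).symm
  have hF : P.SubFI (Sᶜ ∪ {v}) v a b :=
    ⟨fun s hs e => npi_aux P v a b hb S h s hs e,
     fun s hs e => npi_aux P v b a ha S h' s hs e⟩
  exact ⟨hF, hF⟩
end

section
/- If values a, b ∈ D(v) of a binary CSP are dynamically neighborhood interchangeable with respect to a partial assignment A on a set W of variables with v ∉ W, then a and b are fully dynamically interchangeable with respect to A. -/
theorem stmt_11_aux {V α : Type} [DecidableEq V]
    (P : BinaryCSP V α) (v : V) (a b : α) (hb : b ∈ P.dom v)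
    (W : Set V) (A : V → α)
    (h : P.DynNI W A v a b) (s : V → α) (hs : P.Solution s)
    (hsA : ∀ w ∈ W, s w = A w) (hsv : s v = a) :
    P.Solution (Function.update s v b) := by
  have key : ∀ w, P.hasCstr v w → P.compat v b w (s w) := by
    intro w hw
    have hc := hs.2 v w hw
    rw [hsv] at hc
    by_cases hwW : w ∈ W
    · rw [hsA w hwW] at hc ⊢
      exact (h.2 w hwW hw).1 hc
    · have hm : s w ∈ P.Support v a w := ⟨hs.1 w, hc⟩
      rw [h.1 w hwW hw] at hm
      exact hm.2
  refine ⟨fun x => ?_, fun x y hxy => ?_⟩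
  · by_cases hx : x = v
    · subst hx; simpa using hb
    · simpa [hx] using hs.1 x
  · by_cases hx : x = v
    · subst hx
      have hy : y ≠ x := fun e => P.hasCstr_irrefl x (e ▸ hxy)
      simpa [hy] using key y hxy
    · by_cases hy : y = v
      · subst hy
        simpa [hx] using P.compat_symm (key x (P.hasCstr_symm hxy))
      · simpa [hx, hy] using hs.2 x y hxy

/-- DynNI with respect to a partial assignment `A` on `W` (with `v ∉ W`)
implies FDynI with respect to `A`. -/
theorem stmt_11 {V α : Type} [Fintype V] [DecidableEq V] [Fintype α]
    (P : BinaryCSP V α) (v : V) (a b : α)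
    (ha : a ∈ P.dom v) (hb : b ∈ P.dom v)
    (W : Set V) (A : V → α) (hvW : v ∉ W) (hA : ∀ w ∈ W, A w ∈ P.dom w)
    (h : P.DynNI W A v a b) :
    P.FDynI W A v a b := by
  refine ⟨fun s hs hsA hsv => stmt_11_aux P v a b hb W A h s hs hsA hsv,
    fun s hs hsA hsv => stmt_11_aux P v b a ha W A ?_ s hs hsA hsv⟩
  exact ⟨fun w hw hc => (h.1 w hw hc).symm, fun w hw hc => (h.2 w hw hc).symm⟩
end

section
/- If values a, b ∈ D(v) of a binary CSP are neighborhood interchangeable, then for every set S of variables with v ∉ S, a and b are neighborhood tuple interchangeable with respect to S. -/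
/-- NI implies NTI with respect to every set `S` of variables with `v ∉ S`. -/
theorem stmt_12 {V α : Type} [Fintype V] [DecidableEq V] [Fintype α]
    (P : BinaryCSP V α) (v : V) (a b : α)
    (ha : a ∈ P.dom v) (hb : b ∈ P.dom v)
    (hNI : P.NI v a b) :
    ∀ S : Set V, v ∉ S → P.NTI S v a b := by
  have key : ∀ (a b : α), b ∈ P.dom v → P.NI v a b → ∀ S : Set V,
      ∀ t, P.SubSolution (insert v S) t → t v = a →
      ∃ t', P.SubSolution (insert v S) t' ∧ t' v = b ∧
      ∀ u ∈ insert v S, ∀ w, w ∉ insert v S → P.hasCstr u w →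
        P.Support u (t u) w = P.Support u (t' u) w := by
    intro a b hb hNI S t ht hta
    -- replacing `a` by `b` keeps compatibility with every neighbor in the tuple
    have hc : ∀ w ∈ insert v S, P.hasCstr v w → P.compat v b w (t w) := by
      intro w hw hvw
      have h1 : t w ∈ P.Support v a w :=
        ⟨ht.1 w hw, hta ▸ ht.2 v (Set.mem_insert v S) w hw hvw⟩
      rw [hNI w hvw] at h1
      exact h1.2
    refine ⟨Function.update t v b, ⟨?_, ?_⟩, Function.update_self .., ?_⟩
    · intro u hu
      by_cases h : u = v
      · subst h
        simpa using hb
      · simpa [h] using ht.1 u hu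
    · intro u hu w hw huw
      by_cases h : u = v
      · subst h
        have hwu : w ≠ u := fun e => P.hasCstr_irrefl u (e ▸ huw)
        simpa [hwu] using hc w hw huw
      · by_cases h' : w = v
        · subst h'
          simpa [h] using P.compat_symm (hc u hu (P.hasCstr_symm huw))
        · simpa [h, h'] using ht.2 u hu w hw huw
    · intro u hu w hw huw
      by_cases h : u = v
      · subst h
        simpa [hta] using hNI w huw
      · simp [h]
  intro S _
  exact ⟨key a b hb hNI S, key b a ha (fun w hw => (hNI w hw).symm) S⟩
end

section
/- If values a, b ∈ D(v) of a binary CSP are neighborhood tuple interchangeable with respect to a set S of variables with v ∉ S, then a and b are partially interchangeable with respect to the set S ∪ {v}. -/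
theorem nti_aux {V α : Type} (P : BinaryCSP V α) (T : Set V) (v : V) (hv : v ∈ T) (b : α)
    (s t : V → α) (hs : P.Solution s) (ht : P.SubSolution T t) (htb : t v = b)
    (hsup : ∀ u ∈ T, ∀ w, w ∉ T → P.hasCstr u w →
      P.Support u (s u) w = P.Support u (t u) w) :
    ∃ s', P.Solution s' ∧ s' v = b ∧ ∀ w ∉ T, s' w = s w := by
  classical
  have key : ∀ u ∈ T, ∀ w, w ∉ T → P.hasCstr u w → P.compat u (t u) w (s w) := by
    intro u hu w hw huw
    have h1 : s w ∈ P.Support u (s u) w := ⟨hs.1 w, hs.2 u w huw⟩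
    rw [hsup u hu w hw huw] at h1
    exact h1.2
  refine ⟨fun u => if u ∈ T then t u else s u, ⟨?_, ?_⟩, ?_, ?_⟩
  · intro u
    by_cases hu : u ∈ T
    · simpa [hu] using ht.1 u hu
    · simpa [hu] using hs.1 u
  · intro u w huw
    by_cases hu : u ∈ T <;> by_cases hw : w ∈ T <;> simp only [hu, hw, if_true, if_false]
    · exact ht.2 u hu w hw huw
    · exact key u hu w hw huw
    · exact P.compat_symm (key w hw u hu (P.hasCstr_symm huw))
    · exact hs.2 u w huw
  · simpa [hv] using htb
  · intro w hw
    simp [hw]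

/-- NTI with respect to `S` (with `v ∉ S`) implies PI with respect to
`S ∪ {v}`. -/
theorem stmt_13 {V α : Type} [Fintype V] [DecidableEq V] [Fintype α]
    (P : BinaryCSP V α) (v : V) (a b : α)
    (ha : a ∈ P.dom v) (hb : b ∈ P.dom v)
    (S : Set V) (hvS : v ∉ S)
    (h : P.NTI S v a b) :
    P.PI (insert v S) v a b := by
  have hv : v ∈ insert v S := Set.mem_insert v S
  constructor
  · intro s hs hsa
    obtain ⟨t, ht, htb, hsup⟩ := h.1 s ⟨fun u _ => hs.1 u, fun u _ w _ => hs.2 u w⟩ hsa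
    exact nti_aux P _ v hv b s t hs ht htb hsup
  · intro s hs hsa
    obtain ⟨t, ht, htb, hsup⟩ := h.2 s ⟨fun u _ => hs.1 u, fun u _ w _ => hs.2 u w⟩ hsa
    exact nti_aux P _ v hv a s t hs ht htb hsup
end

section
/- Let u and u' be assignments on a subset U ⊆ V of the variables of a binary CSP that are forward neighborhood interchangeable, and suppose u' satisfies every constraint relating two variables of U. Then u' is tuple substitutable for u: for every solution s with s(x) = u(x) for all x ∈ U, the assignment that equals u' on U and equals s on V ∖ U is a solution. -/
/-- if assignments `u`, `u'` on `U` are ForwNI and `u'` satisfies every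
constraint inside `U`, then `u'` is tuple substitutable for `u`: any solution agreeing
with `u` on `U` remains a solution when replaced by `u'` on `U`. -/
theorem stmt_16 {V α : Type} [Fintype V] [DecidableEq V] [Fintype α]
    (P : BinaryCSP V α) (U : Set V) (u u' : V → α)
    (hu : ∀ x ∈ U, u x ∈ P.dom x)
    (hu' : P.SubSolution U u')
    (hf : P.ForwNI U u u') :
    ∀ s, P.Solution s → (∀ x ∈ U, s x = u x) →
      ∀ s' : V → α, (∀ x ∈ U, s' x = u' x) → (∀ x ∉ U, s' x = s x) →
        P.Solution s' := by
  intro s hs hsu s' h1 h2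
  have key : ∀ x ∈ U, ∀ w, w ∉ U → P.hasCstr x w → P.compat x (s' x) w (s' w) := by
    intro x hx w hw hc
    have hm : s w ∈ P.Support x (u x) w := by
      refine ⟨hs.1 w, ?_⟩
      rw [← hsu x hx]
      exact hs.2 x w hc
    rw [hf x hx w hw hc] at hm
    rw [h1 x hx, h2 w hw]
    exact hm.2
  refine ⟨fun v => ?_, fun v w hc => ?_⟩
  · by_cases hv : v ∈ U
    · rw [h1 v hv]
      exact hu'.1 v hv
    · rw [h2 v hv]
      exact hs.1 v
  · by_cases hv : v ∈ U
    · by_cases hw : w ∈ U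
      · rw [h1 v hv, h1 w hw]
        exact hu'.2 v hv w hw hc
      · exact key v hv w hw hc
    · by_cases hw : w ∈ U
      · exact P.compat_symm (key w hw v hv (P.hasCstr_symm hc))
      · rw [h2 v hv, h2 w hw]
        exact hs.2 v w hc
end
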